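/- Under Assumption (C), let u = (u¹,…,u^d) be a probabilistic solution (for some initial data) such that t ↦ u(t,·) is continuous in L¹_loc(ℝ)^d. Then for every γ ∈ {1,…,d} and Lebesgue-almost every v ∈ (0,1), the quantile trajectory t ↦ X_v^γ(t) satisfies, for all 0 ≤ t₁ ≤ t₂, X_v^γ(t₁) + λ̲^γ (t₂ − t₁) ≤ X_v^γ(t₂) ≤ X_v^γ(t₁) + λ̄^γ (t₂ − t₁); in particular t ↦ X_v^γ(t) is Lipschitz continuous with almost-everywhere derivative lying in [λ̲^γ, λ̄^γ]. -/

import Mathlib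

open MeasureTheory Filter Set

noncomputable section

/-- A cumulative distribution function on ℝ: nondecreasing, right-continuous,
tending to `0` at `-∞` and to `1` at `+∞`. -/
def IsCDF (F : ℝ → ℝ) : Prop :=
  Monotone F ∧ (∀ x : ℝ, ContinuousWithinAt F (Ici x) x) ∧
    Tendsto F atBot (nhds 0) ∧ Tendsto F atTop (nhds 1)

/-- The pseudo-inverse `F⁻¹(v) = inf {x | v ≤ F x}` of a CDF. -/
def cdfInv (F : ℝ → ℝ) (v : ℝ) : ℝ := sInf {x : ℝ | v ≤ F x}

/-- The velocity function `λ^γ{u}(t,x)` obtained by averaging the `γ`-th coordinate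
between the left limit `u^γ(t,x⁻)` and the value `u^γ(t,x)`. -/
def lamBrace {d : ℕ} (lam : Fin d → (Fin d → ℝ) → ℝ)
    (u : Fin d → ℝ → ℝ → ℝ) (γ : Fin d) (t x : ℝ) : ℝ :=
  ∫ θ in (0:ℝ)..1,
    lam γ (Function.update (fun γ' => u γ' t x) γ
      ((1 - θ) * Function.leftLim (u γ t) x + θ * u γ t x))

/-- A test function `φ` of class `C^{1,0}_c`: continuous, compactly supported,
with continuous time derivative `φt`. -/
def IsTestFun (φ φt : ℝ → ℝ → ℝ) : Prop :=
  Continuous (fun p : ℝ × ℝ => φ p.1 p.2) ∧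
    HasCompactSupport (fun p : ℝ × ℝ => φ p.1 p.2) ∧
    Continuous (fun p : ℝ × ℝ => φt p.1 p.2) ∧
    ∀ t x : ℝ, HasDerivAt (fun s => φ s x) (φt t x) t

/-- A probabilistic solution to the diagonal hyperbolic system
`∂_t u^γ + λ^γ(u) ∂_x u^γ = 0` with initial data `u0`. -/
def IsProbSol {d : ℕ} (lam : Fin d → (Fin d → ℝ) → ℝ)
    (u : Fin d → ℝ → ℝ → ℝ) (u0 : Fin d → ℝ → ℝ) : Prop :=
  (∀ γ : Fin d, Measurable fun p : Ici (0:ℝ) × ℝ => u γ (p.1 : ℝ) p.2) ∧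
  (∀ (γ : Fin d) (t : ℝ), 0 ≤ t → IsCDF (u γ t)) ∧
  (∀ γ : Fin d, IsCDF (u0 γ)) ∧
  ∃ μ : Fin d → ℝ → Measure ℝ,
    (∀ (γ : Fin d) (t : ℝ), IsProbabilityMeasure (μ γ t)) ∧
    (∀ (γ : Fin d) (t : ℝ), 0 ≤ t → ∀ x : ℝ, (μ γ t (Iic x)).toReal = u γ t x) ∧
    ∀ φ φt : Fin d → ℝ → ℝ → ℝ, (∀ γ, IsTestFun (φ γ) (φt γ)) →
      (∑ γ : Fin d, ((∫ t in Ici (0:ℝ), ∫ x : ℝ, φt γ t x * u γ t x) +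
          ∫ x : ℝ, φ γ 0 x * u0 γ x))
        = ∑ γ : Fin d,
            ∫ t in Ici (0:ℝ), ∫ x : ℝ, φ γ t x * lamBrace lam u γ t x ∂(μ γ t)

/-- Continuity of `t ↦ u(t,·)` in `L¹_loc(ℝ)^d` on `[0,∞)`. -/
def ContL1loc {d : ℕ} (u : Fin d → ℝ → ℝ → ℝ) : Prop :=
  ∀ (γ : Fin d) (a b t₀ : ℝ), 0 ≤ t₀ →
    Tendsto (fun t => ∫ x in Icc a b, |u γ t x - u γ t₀ x|)
      (nhdsWithin t₀ (Ici 0)) (nhds 0)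

lemma aux_ibp (m : Measure ℝ) [IsProbabilityMeasure m] (F ψ ψ' : ℝ → ℝ)
    (hF : ∀ x, (m (Iic x)).toReal = F x) (hψ : ∀ x, HasDerivAt ψ (ψ' x) x)
    (hc : Continuous ψ') (hs : HasCompactSupport ψ) :
    ∫ x, ψ' x * F x = - ∫ x, ψ x ∂m := by
  have hd : deriv ψ = ψ' := funext fun x => (hψ x).deriv
  have hC1 : ContDiff ℝ 1 ψ := by
    rw [contDiff_one_iff_deriv]
    exact ⟨fun x => (hψ x).differentiableAt, hd ▸ hc⟩
  have hs' : HasCompactSupport ψ' := hd ▸ hs.deriv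
  have hint : Integrable ψ' := hc.integrable_of_hasCompactSupport hs'
  have h1 : ∀ x, ψ' x * F x = ∫ y, (Iic x).indicator (fun _ => ψ' x) y ∂m := by
    intro x
    rw [integral_indicator measurableSet_Iic, setIntegral_const, ← hF x, smul_eq_mul, mul_comm]
    rfl
  have h2 : ∀ y, ∫ x, (Iic x).indicator (fun _ => ψ' x) y = - ψ y := by
    intro y
    have : (fun x => (Iic x).indicator (fun _ => ψ' x) y) = (Ici y).indicator ψ' := by
      ext x; simp [indicator]
    rw [this, integral_indicator measurableSet_Ici, integral_Ici_eq_integral_Ioi, ← hd,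
      HasCompactSupport.integral_Ioi_deriv_eq hC1 hs]
  simp_rw [h1]
  rw [integral_integral_swap]
  · simp_rw [h2]; rw [integral_neg]
  · have hm : MeasurableSet {p : ℝ × ℝ | p.2 ≤ p.1} := measurableSet_le measurable_snd measurable_fst
    have h3 : Integrable (fun p : ℝ × ℝ => ψ' p.1) (volume.prod m) := hint.comp_fst m
    have := h3.indicator hm
    refine this.congr (Eventually.of_forall fun p => ?_)
    simp [indicator, Function.uncurry]

lemma aux_mono (g : ℝ → ℝ) (hg : Continuous g)
    (h : ∀ χ χ' : ℝ → ℝ, (∀ t, HasDerivAt χ (χ' t) t) → Continuous χ' → (∀ t, 0 ≤ χ t) →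
      HasCompactSupport χ → HasCompactSupport χ' → (∀ t ≤ 0, χ t = 0) → (∀ t ≤ 0, χ' t = 0) →
      ∫ t, χ' t * g t ≤ 0) (t₁ t₂ : ℝ) (h0 : 0 < t₁) (h12 : t₁ < t₂) : g t₁ ≤ g t₂ := by
  by_contra! hlt
  obtain ⟨c, hc2, hc1⟩ := exists_between hlt
  obtain ⟨δ₁, hδ₁, H1⟩ := Metric.eventually_nhds_iff.1 (hg.continuousAt.eventually_const_lt hc1)
  obtain ⟨δ₂, hδ₂, H2⟩ := Metric.eventually_nhds_iff.1 (hg.continuousAt.eventually_lt_const hc2)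
  obtain ⟨δ, hδ0, hδ⟩ : ∃ δ, 0 < δ ∧ δ < min (min δ₁ δ₂) (min t₁ ((t₂ - t₁) / 2)) :=
    exists_between (by
      have : 0 < (t₂ - t₁) / 2 := by linarith
      positivity)
  simp only [lt_min_iff] at hδ
  obtain ⟨⟨hd1, hd2⟩, hd3, hd4⟩ := hδ
  set ρ : ℝ → ℝ := fun s => max 0 (δ - |s|) with hρ
  have hρc : Continuous ρ := by fun_prop
  have hρ0 : ∀ s, 0 ≤ ρ s := fun s => le_max_left _ _
  have hρz : ∀ s, δ ≤ |s| → ρ s = 0 := fun s hs => max_eq_left (by linarith)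
  set R : ℝ → ℝ := fun t => ∫ s in (-δ)..t, ρ s with hR
  have hRd : ∀ t, HasDerivAt R (ρ t) t := fun t =>
    intervalIntegral.integral_hasDerivAt_right (hρc.intervalIntegrable _ _)
      (hρc.stronglyMeasurableAtFilter _ _) hρc.continuousAt
  have hRm : Monotone R := monotone_of_hasDerivAt_nonneg hRd hρ0
  have hR0 : ∀ t ≤ -δ, R t = 0 := by
    intro t ht
    simp only [hR]
    rw [intervalIntegral.integral_congr (g := fun _ => 0)]
    · simp
    · intro s hs
      rw [uIcc_of_ge ht] at hs
      apply hρz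
      rw [abs_of_neg (by linarith [hs.2])]; linarith [hs.2]
  have hR1 : ∀ t, δ ≤ t → R t = R δ := by
    intro t ht
    simp only [hR]
    rw [← intervalIntegral.integral_add_adjacent_intervals (hρc.intervalIntegrable (-δ) δ)
      (hρc.intervalIntegrable δ t), intervalIntegral.integral_congr (a := δ) (g := fun _ => 0)]
    · simp
    · intro s hs
      rw [uIcc_of_le ht] at hs
      apply hρz
      rw [abs_of_pos (by linarith [hs.1])]; linarith [hs.1]
  set χ : ℝ → ℝ := fun t => R (t - t₁) - R (t - t₂) with hχ
  set χ' : ℝ → ℝ := fun t => ρ (t - t₁) - ρ (t - t₂) with hχ'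
  have hχd : ∀ t, HasDerivAt χ (χ' t) t := fun t =>
    ((hRd (t - t₁)).comp_sub_const t t₁).sub ((hRd (t - t₂)).comp_sub_const t t₂)
  have hχc : Continuous χ' := by fun_prop
  have hχs : HasCompactSupport χ := by
    refine HasCompactSupport.intro (isCompact_Icc (a := t₁ - δ) (b := t₂ + δ)) fun t ht => ?_
    simp only [hχ]
    rw [mem_Icc, not_and_or, not_le, not_le] at ht
    rcases ht with ht | ht
    · rw [hR0 _ (by linarith), hR0 _ (by linarith), sub_zero]
    · rw [hR1 (t - t₁) (by linarith), hR1 (t - t₂) (by linarith), sub_self]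
  have hd : deriv χ = χ' := funext fun x => (hχd x).deriv
  have hχs' : HasCompactSupport χ' := hd ▸ hχs.deriv
  have key := h χ χ' hχd hχc (fun t => sub_nonneg.2 (hRm (by linarith))) hχs hχs'
    (fun t ht => by
      simp only [hχ]; rw [hR0 _ (by linarith), hR0 _ (by linarith), sub_zero])
    (fun t ht => by
      simp only [hχ']
      rw [hρz, hρz, sub_zero]
      · rw [abs_of_neg (by linarith)]; linarith
      · rw [abs_of_neg (by linarith)]; linarith)
  have hz : ∫ t, χ' t = 0 := by
    apply integral_eq_zero_of_hasDerivAt_of_integrable hχd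
    · exact hχc.integrable_of_hasCompactSupport hχs'
    · exact (continuous_iff_continuousAt.2 fun t => (hχd t).continuousAt).integrable_of_hasCompactSupport hχs
  have hpos : 0 < ∫ t, χ' t * (g t - c) := by
    apply Continuous.integral_pos_of_hasCompactSupport_nonneg_nonzero (x := t₁)
    · fun_prop
    · exact hχs'.mul_right
    · intro t
      simp only [hχ', Pi.zero_apply]
      by_cases a1 : |t - t₁| < δ
      · have a2 : δ ≤ |t - t₂| := by
          rw [abs_lt] at a1
          rw [abs_of_neg (by linarith)]; linarith
        rw [hρz _ a2, sub_zero]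
        exact mul_nonneg (hρ0 _) (sub_nonneg.2 (H1 (by rw [Real.dist_eq]; linarith)).le)
      · rw [hρz _ (not_lt.1 a1), zero_sub]
        by_cases a2 : |t - t₂| < δ
        · have := H2 (y := t) (by rw [Real.dist_eq]; linarith)
          have := hρ0 (t - t₂)
          nlinarith
        · rw [hρz _ (not_lt.1 a2)]; simp
    · simp only [hχ']
      rw [hρz (t₁ - t₂) (by rw [abs_of_neg (by linarith)]; linarith)]
      have : ρ (t₁ - t₁) = δ := by simp [hρ, hδ0.le]
      rw [this]
      have : 0 < (δ - 0) * (g t₁ - c) := by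
        rw [sub_zero]; exact mul_pos hδ0 (by linarith)
      exact this.ne'
  have i1 : Integrable (fun t => χ' t * g t) :=
    (hχc.mul hg).integrable_of_hasCompactSupport hχs'.mul_right
  have i2 : Integrable (fun t => χ' t * c) :=
    (hχc.integrable_of_hasCompactSupport hχs').mul_const c
  simp_rw [mul_sub] at hpos
  rw [integral_sub i1 i2, integral_mul_const, hz] at hpos
  linarith

lemma aux_contG (U : ℝ → ℝ → ℝ) (hm : ∀ t, Measurable (U t)) (hb : ∀ t x, |U t x| ≤ 1)
    (hL : ∀ a b t₀ : ℝ, Tendsto (fun t => ∫ x in Icc a b, |U t x - U t₀ x|) (nhds t₀) (nhds 0))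
    (c : ℝ) (ψ : ℝ → ℝ) (hψ : Continuous ψ) (hs : HasCompactSupport ψ) :
    Continuous (fun t => ∫ x, ψ (x - c * t) * U t x) := by
  have hsh : ∀ t, HasCompactSupport (fun x => ψ (x - c * t)) := fun t =>
    hs.comp_homeomorph (Homeomorph.subRight (c * t))
  have hint : ∀ t, Integrable (fun x => ψ (x - c * t)) := fun t =>
    (show Continuous (fun x => ψ (x - c * t)) by fun_prop).integrable_of_hasCompactSupport (hsh t)
  have hprod : ∀ (f : ℝ → ℝ) (t : ℝ), Integrable f → Integrable (fun x => f x * U t x) := by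
    intro f t hf
    exact hf.mul_bdd (c := 1) (hm t).aestronglyMeasurable
      (Eventually.of_forall fun x => by rw [Real.norm_eq_abs]; exact hb t x)
  obtain ⟨M, hM⟩ := hψ.bounded_above_of_compact_support hs
  obtain ⟨r, hr⟩ := hs.isCompact.isBounded.subset_closedBall 0
  have hz : ∀ y, r < |y| → ψ y = 0 := by
    intro y hy
    by_contra hne
    have := hr (subset_tsupport _ hne)
    rw [mem_closedBall_zero_iff, Real.norm_eq_abs] at this
    linarith
  rw [continuous_iff_continuousAt]
  intro t₀
  rw [ContinuousAt, tendsto_iff_dist_tendsto_zero]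
  have hT1 : Tendsto (fun t => ∫ x, |ψ (x - c * t) - ψ (x - c * t₀)|) (nhds t₀) (nhds 0) := by
    have hco : ContinuousOn (fun t => ∫ x, |ψ (x - c * t) - ψ (x - c * t₀)|)
        (Metric.ball t₀ 1) := by
      refine continuousOn_integral_of_compact_support (f := fun t x => |ψ (x - c * t) - ψ (x - c * t₀)|)
        (isCompact_closedBall (c * t₀) (r + |c|)) ?_ ?_
      · apply Continuous.continuousOn
        simp only [Function.uncurry_def]
        fun_prop
      · intro t x ht hx
        rw [Metric.mem_ball, Real.dist_eq] at ht
        rw [Metric.mem_closedBall, Real.dist_eq, not_le] at hx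
        have h1 : |x - c * t₀| ≤ |x - c * t| + |c| * |t - t₀| := by
          rw [← abs_mul]
          calc |x - c * t₀| = |(x - c * t) + c * (t - t₀)| := by ring_nf
            _ ≤ _ := abs_add_le _ _
        have h2 : |c| * |t - t₀| ≤ |c| := mul_le_of_le_one_right (abs_nonneg _) ht.le
        have h3 := abs_nonneg c
        rw [hz _ (by linarith), hz _ (by linarith)]; simp
    have := (hco.continuousAt (Metric.ball_mem_nhds t₀ one_pos)).tendsto
    simpa using this
  have hT2 := (hL (c * t₀ - r) (c * t₀ + r) t₀).const_mul M
  have hT := hT1.add hT2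
  rw [mul_zero, add_zero] at hT
  refine squeeze_zero (fun t => dist_nonneg) (fun t => ?_) hT
  rw [Real.dist_eq]
  have e1 : (∫ x, ψ (x - c * t) * U t x) - ∫ x, ψ (x - c * t₀) * U t₀ x
      = (∫ x, (ψ (x - c * t) - ψ (x - c * t₀)) * U t x)
        + ∫ x, ψ (x - c * t₀) * (U t x - U t₀ x) := by
    simp_rw [mul_sub, sub_mul]
    rw [integral_sub (hprod _ _ (hint _)) (hprod _ _ (hint _)),
      integral_sub (hprod _ _ (hint _)) (hprod _ _ (hint _))]
    ring
  rw [e1]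
  refine (abs_add_le _ _).trans (add_le_add ?_ ?_)
  · refine abs_integral_le_integral_abs.trans ?_
    refine integral_mono (hprod _ _ ((hint t).sub (hint t₀))).abs ((hint t).sub (hint t₀)).abs ?_
    intro x
    simp only [abs_mul]
    exact mul_le_of_le_one_right (abs_nonneg _) (hb t x)
  · refine abs_integral_le_integral_abs.trans ?_
    rw [← integral_const_mul, ← setIntegral_eq_integral_of_forall_compl_eq_zero
      (s := Icc (c * t₀ - r) (c * t₀ + r))]
    · have hbi : IntegrableOn (fun x => |U t x - U t₀ x|) (Icc (c * t₀ - r) (c * t₀ + r)) := by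
        refine Measure.integrableOn_of_bounded (M := 2) (by simp) ?_ ?_
        · exact ((hm t).sub (hm t₀)).abs.aestronglyMeasurable
        · refine Eventually.of_forall fun x => ?_
          rw [Real.norm_eq_abs, abs_abs]
          refine (abs_sub _ _).trans ?_
          linarith [hb t x, hb t₀ x]
      refine integral_mono_ae ?_ (hbi.const_mul M) (Eventually.of_forall fun x => ?_)
      · have : Integrable (fun x => ψ (x - c * t₀) * (U t x - U t₀ x)) := by
          simp_rw [mul_sub]
          exact (hprod _ _ (hint _)).sub (hprod _ _ (hint _))
        exact this.abs.integrableOn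
      · simp only [abs_mul]
        exact mul_le_mul_of_nonneg_right (hM _) (abs_nonneg _)
    · intro x hx
      rw [hz, zero_mul, abs_zero]
      by_contra! hh
      rw [abs_le] at hh
      exact hx ⟨by linarith, by linarith⟩

lemma aux_weak (V L : ℝ → ℝ → ℝ) (κ : ProbabilityTheory.Kernel ℝ ℝ)
    [ProbabilityTheory.IsMarkovKernel κ]
    (hV : ∀ t x, (κ t (Iic x)).toReal = V t x)
    (hm : ∀ t, Measurable (V t)) (hb : ∀ t x, |V t x| ≤ 1)
    (hL : ∀ a b t₀ : ℝ, Tendsto (fun t => ∫ x in Icc a b, |V t x - V t₀ x|) (nhds t₀) (nhds 0))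
    (hLm : Measurable (Function.uncurry L)) (C : ℝ) (hLb : ∀ t x, |L t x| ≤ C)
    (hw : ∀ φ φt, IsTestFun φ φt → (∀ x, φ 0 x = 0) →
      ∫ t in Ici (0:ℝ), ∫ x, φt t x * V t x = ∫ t in Ici (0:ℝ), ∫ x, φ t x * L t x ∂(κ t))
    (c : ℝ) (ψ ψ' χ χ' : ℝ → ℝ) (hψ : ∀ x, HasDerivAt ψ (ψ' x) x) (hψc : Continuous ψ')
    (hψs : HasCompactSupport ψ)
    (hχ : ∀ x, HasDerivAt χ (χ' x) x) (hχc : Continuous χ')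
    (hχs : HasCompactSupport χ) (hχs' : HasCompactSupport χ') (hχ0 : χ 0 = 0)
    (hχ0' : ∀ t ≤ 0, χ' t = 0) :
    ∫ t, χ' t * ∫ x, ψ (x - c * t) * V t x
      = ∫ t in Ici (0:ℝ), χ t * ∫ x, ψ (x - c * t) * (L t x - c) ∂(κ t) := by
  have hψs' : HasCompactSupport ψ' := by
    have : deriv ψ = ψ' := funext fun x => (hψ x).deriv
    exact this ▸ hψs.deriv
  have cψ : Continuous ψ := continuous_iff_continuousAt.2 fun t => (hψ t).continuousAt
  have cχ : Continuous χ := continuous_iff_continuousAt.2 fun t => (hχ t).continuousAt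
  have hG := aux_contG V hm hb hL c ψ cψ hψs
  have hG' := aux_contG V hm hb hL c ψ' hψc hψs'
  have hint : ∀ f : ℝ → ℝ, Continuous f → HasCompactSupport f → ∀ t,
      Integrable (fun x => f (x - c * t) * V t x) := by
    intro f hf hfs t
    refine Integrable.mul_bdd (c := 1) ?_ (hm t).aestronglyMeasurable
      (Eventually.of_forall fun x => by rw [Real.norm_eq_abs]; exact hb t x)
    exact (show Continuous (fun x => f (x - c * t)) by fun_prop).integrable_of_hasCompactSupport
      (hfs.comp_homeomorph (Homeomorph.subRight (c * t)))
  obtain ⟨M, hM⟩ := cψ.bounded_above_of_compact_support hψs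
  have hkint : ∀ t, Integrable (fun x => ψ (x - c * t)) (κ t) := fun t =>
    Integrable.of_bound (C := M) (by fun_prop) (Eventually.of_forall fun x => hM _)
  have hLmt : ∀ t, Measurable (L t) := fun t => hLm.comp measurable_prodMk_left
  have hkint2 : ∀ t, Integrable (fun x => ψ (x - c * t) * L t x) (κ t) := fun t =>
    (hkint t).mul_bdd (c := C) (hLmt t).aestronglyMeasurable
      (Eventually.of_forall fun x => by rw [Real.norm_eq_abs]; exact hLb t x)
  have hibp : ∀ t, ∫ x, ψ' (x - c * t) * V t x = - ∫ x, ψ (x - c * t) ∂(κ t) := by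
    intro t
    refine aux_ibp (κ t) (V t) (fun x => ψ (x - c * t)) (fun x => ψ' (x - c * t)) (hV t)
      (fun x => (hψ _).comp_sub_const x (c * t)) (by fun_prop)
      (hψs.comp_homeomorph (Homeomorph.subRight (c * t)))
  -- the test function
  have htest : IsTestFun (fun t x => χ t * ψ (x - c * t))
      (fun t x => χ' t * ψ (x - c * t) - c * (χ t * ψ' (x - c * t))) := by
    refine ⟨by fun_prop, ?_, by fun_prop, ?_⟩
    · let e : ℝ × ℝ → ℝ × ℝ := fun p => (p.1, p.2 + c * p.1)
      have he : Continuous e := by fun_prop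
      refine HasCompactSupport.intro ((hχs.isCompact.prod hψs.isCompact).image he) ?_
      rintro ⟨t, x⟩ hp
      by_contra hne
      apply hp
      refine ⟨(t, x - c * t), ⟨subset_tsupport _ (left_ne_zero_of_mul hne),
        subset_tsupport _ (right_ne_zero_of_mul hne)⟩, ?_⟩
      simp [e]
    · intro t x
      have h1 : HasDerivAt (fun s => x - c * s) (-c) t := by
        simpa using ((hasDerivAt_id t).const_mul c).const_sub x
      have h2 := (hχ t).mul ((hψ (x - c * t)).comp t h1)
      refine h2.congr_deriv ?_
      simp only [Function.comp]; ring
  have key := hw _ _ htest (fun x => by simp [hχ0])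
  have e1 : ∀ t, ∫ x, (χ' t * ψ (x - c * t) - c * (χ t * ψ' (x - c * t))) * V t x
      = χ' t * (∫ x, ψ (x - c * t) * V t x) - c * χ t * ∫ x, ψ' (x - c * t) * V t x := by
    intro t
    rw [← integral_const_mul, ← integral_const_mul, ← integral_sub]
    · congr 1; ext x; ring
    · exact (hint ψ cψ hψs t).const_mul _
    · exact (hint ψ' hψc hψs' t).const_mul _
  have e2 : ∀ t, ∫ x, χ t * ψ (x - c * t) * L t x ∂(κ t)
      = χ t * ∫ x, ψ (x - c * t) * L t x ∂(κ t) := by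
    intro t
    rw [← integral_const_mul]
    congr 1; ext x; ring
  simp_rw [e1, e2] at key
  have i1 : Integrable (fun t => χ' t * ∫ x, ψ (x - c * t) * V t x) :=
    (hχc.mul hG).integrable_of_hasCompactSupport hχs'.mul_right
  have i2 : Integrable (fun t => c * χ t * ∫ x, ψ' (x - c * t) * V t x) :=
    ((cχ.const_mul c).mul hG').integrable_of_hasCompactSupport (hχs.mul_left.mul_right)
  have hAm : StronglyMeasurable (fun t => ∫ x, ψ (x - c * t) * L t x ∂(κ t)) := by
    apply StronglyMeasurable.integral_kernel_prod_right (κ := κ)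
      (f := fun t x => ψ (x - c * t) * L t x)
    apply Measurable.stronglyMeasurable
    exact (show Continuous fun p : ℝ × ℝ => ψ (p.2 - c * p.1) by fun_prop).measurable.mul hLm
  have i3 : Integrable (fun t => χ t * ∫ x, ψ (x - c * t) * L t x ∂(κ t)) := by
    refine (cχ.integrable_of_hasCompactSupport hχs).mul_bdd (c := M * C)
      hAm.aestronglyMeasurable (Eventually.of_forall fun t => ?_)
    refine (norm_integral_le_of_norm_le_const (C := M * C)
      (Eventually.of_forall fun x => ?_)).trans (by simp)
    rw [norm_mul]
    exact mul_le_mul (hM _) (hLb _ _) (norm_nonneg _) ((norm_nonneg _).trans (hM 0))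
  rw [integral_sub i1.integrableOn i2.integrableOn] at key
  have e3 : ∫ t, χ' t * ∫ x, ψ (x - c * t) * V t x
      = ∫ t in Ici (0:ℝ), χ' t * ∫ x, ψ (x - c * t) * V t x := by
    rw [setIntegral_eq_integral_of_forall_compl_eq_zero]
    intro t ht
    rw [hχ0' t (not_le.1 ht).le, zero_mul]
  have e4 : ∀ t, χ t * ∫ x, ψ (x - c * t) * (L t x - c) ∂(κ t)
      = χ t * (∫ x, ψ (x - c * t) * L t x ∂(κ t))
        + c * χ t * ∫ x, ψ' (x - c * t) * V t x := by
    intro t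
    rw [hibp]
    simp_rw [mul_sub]
    rw [integral_sub (hkint2 t) ((hkint t).mul_const c), integral_mul_const]
    ring
  simp_rw [e4]
  rw [integral_add i3.integrableOn i2.integrableOn, e3]
  linarith

/-- comparison of two CDFs tested against bumps -/
lemma aux_cmp (F₁ F₂ : ℝ → ℝ) (m1 : Monotone F₁) (m2 : Monotone F₂)
    (b1 : ∀ x, |F₁ x| ≤ 1) (b2 : ∀ x, |F₂ x| ≤ 1)
    (r2 : ∀ x : ℝ, ContinuousWithinAt F₂ (Ici x) x) (s₁ s₂ : ℝ)
    (h : ∀ ψ ψ' : ℝ → ℝ, (∀ x, HasDerivAt ψ (ψ' x) x) → Continuous ψ' → HasCompactSupport ψ →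
      (∀ x, 0 ≤ ψ x) → ∫ x, ψ (x - s₁) * F₁ x ≤ ∫ x, ψ (x - s₂) * F₂ x) (y : ℝ) :
    F₁ (y + s₁) ≤ F₂ (y + s₂) := by
  by_contra! hlt
  have hev : ∀ᶠ z in nhdsWithin (y + s₂) (Ioi (y + s₂)), F₂ z < F₁ (y + s₁) :=
    ((r2 (y + s₂)).mono Ioi_subset_Ici_self).eventually_lt_const hlt
  obtain ⟨z, hz, hyz⟩ := (hev.and self_mem_nhdsWithin).exists
  set η := (z - (y + s₂)) / 2 with hη
  have hη0 : 0 < η := by rw [hη]; linarith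
  let f : ContDiffBump (y + η) := ⟨η / 2, η, by linarith, by linarith⟩
  have hfz : ∀ x, f x ≠ 0 → |x - (y + η)| < η := by
    intro x hx
    have : x ∈ Function.support f := hx
    rw [f.support_eq, Metric.mem_ball, Real.dist_eq] at this
    exact this
  have hC : ContDiff ℝ 1 f := f.contDiff
  rw [contDiff_one_iff_deriv] at hC
  have hh := h f (deriv f) (fun x => (hC.1 x).hasDerivAt) hC.2 f.hasCompactSupport
    (fun x => f.nonneg)
  have e1 : ∫ x, f (x - s₁) * F₁ x = ∫ x, f x * F₁ (x + s₁) := by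
    rw [← integral_add_right_eq_self _ s₁]; simp
  have e2 : ∫ x, f (x - s₂) * F₂ x = ∫ x, f x * F₂ (x + s₂) := by
    rw [← integral_add_right_eq_self _ s₂]; simp
  rw [e1, e2] at hh
  have hfi : Integrable f := f.continuous.integrable_of_hasCompactSupport f.hasCompactSupport
  have hpos : 0 < ∫ x, f x := f.integral_pos
  have j1 : Integrable (fun x => f x * F₁ (x + s₁)) :=
    hfi.mul_bdd (c := 1) (m1.measurable.comp (measurable_add_const s₁)).aestronglyMeasurable
      (Eventually.of_forall fun x => b1 _)
  have j2 : Integrable (fun x => f x * F₂ (x + s₂)) :=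
    hfi.mul_bdd (c := 1) (m2.measurable.comp (measurable_add_const s₂)).aestronglyMeasurable
      (Eventually.of_forall fun x => b2 _)
  have k1 : (∫ x, f x) * F₁ (y + s₁) ≤ ∫ x, f x * F₁ (x + s₁) := by
    rw [← integral_mul_const]
    refine integral_mono (hfi.mul_const _) j1 fun x => ?_
    by_cases hx : f x = 0
    · simp [hx]
    · have := abs_lt.1 (hfz x hx)
      exact mul_le_mul_of_nonneg_left (m1 (by linarith)) f.nonneg
  have k2 : ∫ x, f x * F₂ (x + s₂) ≤ (∫ x, f x) * F₂ z := by
    rw [← integral_mul_const]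
    refine integral_mono j2 (hfi.mul_const _) fun x => ?_
    by_cases hx : f x = 0
    · simp [hx]
    · have := abs_lt.1 (hfz x hx)
      refine mul_le_mul_of_nonneg_left (m2 ?_) f.nonneg
      linarith
  nlinarith

lemma aux_cdf_bdd (F : ℝ → ℝ) (h : IsCDF F) (x : ℝ) : 0 ≤ F x ∧ F x ≤ 1 :=
  ⟨h.1.le_of_tendsto h.2.2.1 x, h.1.ge_of_tendsto h.2.2.2 x⟩

lemma aux_inv (F₁ F₂ : ℝ → ℝ) (h1 : IsCDF F₁) (h2 : IsCDF F₂) (s v : ℝ) (hv : v ∈ Ioo (0:ℝ) 1)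
    (h : ∀ x, F₁ x ≤ F₂ (x + s)) : cdfInv F₂ v ≤ cdfInv F₁ v + s := by
  unfold cdfInv
  have hne : {x : ℝ | v ≤ F₁ x}.Nonempty := by
    obtain ⟨x, hx⟩ := (h1.2.2.2.eventually_const_le hv.2).exists
    exact ⟨x, hx⟩
  have hbd : BddBelow {x : ℝ | v ≤ F₂ x} := by
    obtain ⟨x, hx⟩ := (h2.2.2.1.eventually_lt_const hv.1).exists
    refine ⟨x, fun y hy => ?_⟩
    by_contra! hlt
    have := h2.1 hlt.le
    simp only [mem_setOf_eq] at hy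
    linarith
  rw [← sub_le_iff_le_add]
  refine le_csInf hne fun x hx => ?_
  rw [sub_le_iff_le_add]
  exact csInf_le hbd (le_trans hx (h x))

lemma aux_leftLim (F : ℝ → ℝ) (h : IsCDF F) (x : ℝ) :
    0 ≤ Function.leftLim F x ∧ Function.leftLim F x ≤ 1 := by
  have h1 := h.1.leftLim_le (le_refl x)
  have h2 := h.1.le_leftLim (show x - 1 < x by linarith)
  exact ⟨(aux_cdf_bdd F h _).1.trans h2, h1.trans (aux_cdf_bdd F h _).2⟩

/-- clipping to the unit cube -/
def clipC {d : ℕ} (w : Fin d → ℝ) : Fin d → ℝ := fun i => max 0 (min 1 (w i))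

lemma clipC_mem {d : ℕ} (w : Fin d → ℝ) : clipC w ∈ Icc (0 : Fin d → ℝ) 1 :=
  ⟨fun i => le_max_left _ _, fun i => max_le zero_le_one (min_le_left _ _)⟩

lemma clipC_cont {d : ℕ} : Continuous (clipC (d := d)) := by
  unfold clipC; fun_prop

lemma clipC_eq {d : ℕ} (w : Fin d → ℝ) (hw : w ∈ Icc (0 : Fin d → ℝ) 1) : clipC w = w := by
  ext i
  have h0 : 0 ≤ w i := hw.1 i
  have h1 : w i ≤ 1 := hw.2 i
  simp [clipC, h0, h1]

lemma aux_brace {d : ℕ} (lam : Fin d → (Fin d → ℝ) → ℝ)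
    (u : Fin d → ℝ → ℝ → ℝ) (hu : ∀ (γ : Fin d) (t : ℝ), 0 ≤ t → IsCDF (u γ t))
    (γ : Fin d) (t x : ℝ) (ht : 0 ≤ t) :
    lamBrace lam u γ t x = ∫ θ in (0:ℝ)..1,
      lam γ (clipC (Function.update (fun γ' => u γ' t x) γ
        ((1 - θ) * Function.leftLim (u γ t) x + θ * u γ t x))) := by
  unfold lamBrace
  refine intervalIntegral.integral_congr fun θ hθ => ?_
  rw [uIcc_of_le zero_le_one] at hθ
  rw [clipC_eq]
  obtain ⟨a0, a1⟩ := aux_leftLim _ (hu γ t ht) x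
  have hb := fun i => aux_cdf_bdd _ (hu i t ht) x
  obtain ⟨b0, b1⟩ := hb γ
  constructor
  · intro i
    by_cases hi : i = γ
    · subst hi
      simp only [Function.update_self, Pi.zero_apply]
      nlinarith [hθ.1, hθ.2, mul_nonneg (sub_nonneg.2 hθ.2) a0, mul_nonneg hθ.1 b0]
    · simpa [Function.update_of_ne hi] using (hb i).1
  · intro i
    by_cases hi : i = γ
    · subst hi
      simp only [Function.update_self, Pi.one_apply]
      nlinarith [hθ.1, hθ.2, mul_nonneg (sub_nonneg.2 hθ.2) (sub_nonneg.2 a1),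
        mul_nonneg hθ.1 (sub_nonneg.2 b1)]
    · simpa [Function.update_of_ne hi] using (hb i).2

lemma aux_lamc {d : ℕ} (l : (Fin d → ℝ) → ℝ) (hl : ContinuousOn l (Icc (0 : Fin d → ℝ) 1)) :
    Continuous (fun w => l (clipC w)) :=
  hl.comp_continuous clipC_cont clipC_mem

lemma aux_brace_bd {d : ℕ} (lam : Fin d → (Fin d → ℝ) → ℝ)
    (hlam : ∀ γ : Fin d, ContinuousOn (lam γ) (Icc (0 : Fin d → ℝ) 1))
    (u : Fin d → ℝ → ℝ → ℝ) (hu : ∀ (γ : Fin d) (t : ℝ), 0 ≤ t → IsCDF (u γ t))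
    (γ : Fin d) (t x : ℝ) (ht : 0 ≤ t) :
    sInf (lam γ '' Icc (0 : Fin d → ℝ) 1) ≤ lamBrace lam u γ t x ∧
    lamBrace lam u γ t x ≤ sSup (lam γ '' Icc (0 : Fin d → ℝ) 1) := by
  have hK : IsCompact (lam γ '' Icc (0 : Fin d → ℝ) 1) := isCompact_Icc.image_of_continuousOn (hlam γ)
  rw [aux_brace lam u hu γ t x ht]
  have hc : Continuous fun θ : ℝ => lam γ (clipC (Function.update (fun γ' => u γ' t x) γ
        ((1 - θ) * Function.leftLim (u γ t) x + θ * u γ t x))) := by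
    refine (aux_lamc _ (hlam γ)).comp ?_
    exact continuous_const.update γ (by fun_prop)
  constructor
  · have := intervalIntegral.integral_mono_on (μ := volume) (a := 0) (b := 1) zero_le_one
      (intervalIntegrable_const (c := sInf (lam γ '' Icc (0 : Fin d → ℝ) 1)))
      (hc.intervalIntegrable 0 1)
      (fun θ _ => csInf_le hK.bddBelow (mem_image_of_mem _ (clipC_mem _)))
    simpa using this
  · have := intervalIntegral.integral_mono_on (μ := volume) (a := 0) (b := 1) zero_le_one
      (hc.intervalIntegrable 0 1)
      (intervalIntegrable_const (c := sSup (lam γ '' Icc (0 : Fin d → ℝ) 1)))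
      (fun θ _ => le_csSup hK.bddAbove (mem_image_of_mem _ (clipC_mem _)))
    simpa using this

lemma aux_brace_meas {d : ℕ} (lam : Fin d → (Fin d → ℝ) → ℝ)
    (hlam : ∀ γ : Fin d, ContinuousOn (lam γ) (Icc (0 : Fin d → ℝ) 1))
    (u : Fin d → ℝ → ℝ → ℝ) (hu : ∀ (γ : Fin d) (t : ℝ), 0 ≤ t → IsCDF (u γ t))
    (hm : ∀ γ : Fin d, Measurable fun p : ℝ × ℝ => u γ (max p.1 0) p.2)
    (γ : Fin d) :
    Measurable (Function.uncurry fun t x => lamBrace lam u γ (max t 0) x) := by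
  have hl : Measurable fun p : ℝ × ℝ => Function.leftLim (u γ (max p.1 0)) p.2 := by
    refine measurable_of_tendsto_metrizable
      (f := fun (n : ℕ) (p : ℝ × ℝ) => u γ (max p.1 0) (p.2 - 1 / ((n : ℝ) + 1))) ?_ ?_
    · intro n
      exact (hm γ).comp (show Measurable fun p : ℝ × ℝ => (p.1, p.2 - 1 / ((n : ℝ) + 1)) by fun_prop)
    · rw [tendsto_pi_nhds]
      intro p
      refine ((hu γ (max p.1 0) (le_max_right _ _)).1.tendsto_leftLim p.2).comp ?_
      rw [tendsto_nhdsWithin_iff]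
      constructor
      · have := (tendsto_one_div_add_atTop_nhds_zero_nat (𝕜 := ℝ)).const_sub p.2
        simpa using this
      · refine Eventually.of_forall fun n => ?_
        have : (0:ℝ) < 1 / ((n : ℝ) + 1) := by positivity
        simp only [mem_Iio]; linarith
  have e : (Function.uncurry fun t x => lamBrace lam u γ (max t 0) x) = fun p : ℝ × ℝ =>
      ∫ θ in Ioc (0:ℝ) 1, lam γ (clipC (Function.update (fun γ' => u γ' (max p.1 0) p.2) γ
        ((1 - θ) * Function.leftLim (u γ (max p.1 0)) p.2 + θ * u γ (max p.1 0) p.2))) := by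
    ext p
    rw [Function.uncurry, aux_brace lam u hu γ _ _ (le_max_right _ _),
      intervalIntegral.integral_of_le zero_le_one]
  rw [e]
  refine (StronglyMeasurable.integral_prod_right (ν := volume.restrict (Ioc (0:ℝ) 1))
    (f := fun (p : ℝ × ℝ) (θ : ℝ) =>
      lam γ (clipC (Function.update (fun γ' => u γ' (max p.1 0) p.2) γ
        ((1 - θ) * Function.leftLim (u γ (max p.1 0)) p.2 + θ * u γ (max p.1 0) p.2)))) ?_).measurable
  apply Measurable.stronglyMeasurable
  refine (aux_lamc _ (hlam γ)).measurable.comp ?_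
  rw [measurable_pi_iff]
  intro i
  have hl' := hl.comp (measurable_fst : Measurable (Prod.fst : (ℝ × ℝ) × ℝ → ℝ × ℝ))
  have hu' := fun i => (hm i).comp (measurable_fst : Measurable (Prod.fst : (ℝ × ℝ) × ℝ → ℝ × ℝ))
  by_cases hi : i = γ
  · subst hi
    simp only [Function.update_self]
    exact ((measurable_const.sub measurable_snd).mul hl').add (measurable_snd.mul (hu' i))
  · simp only [Function.update_of_ne hi]
    exact hu' i

/-- **Lipschitz continuity of quantile trajectories**: for a probabilistic solution
continuous in `L¹_loc`, for a.e. `v ∈ (0,1)` the quantile trajectory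
`t ↦ X_v^γ(t) = (u^γ(t,·))⁻¹(v)` moves with speed between
`λ̲^γ = inf λ^γ` and `λ̄^γ = sup λ^γ` over `[0,1]^d`. -/
theorem lipschitz_quantile_trajectories {d : ℕ} (hd : 1 ≤ d)
    (lam : Fin d → (Fin d → ℝ) → ℝ)
    (hlam : ∀ γ : Fin d, ContinuousOn (lam γ) (Icc (0 : Fin d → ℝ) 1))
    (u : Fin d → ℝ → ℝ → ℝ) (u0 : Fin d → ℝ → ℝ)
    (hsol : IsProbSol lam u u0) (hL1 : ContL1loc u) (γ : Fin d) :
    ∀ᵐ v ∂(volume.restrict (Ioo (0:ℝ) 1)),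
      ∀ t₁ t₂ : ℝ, 0 ≤ t₁ → t₁ ≤ t₂ →
        cdfInv (u γ t₁) v + sInf (lam γ '' Icc (0 : Fin d → ℝ) 1) * (t₂ - t₁)
            ≤ cdfInv (u γ t₂) v ∧
        cdfInv (u γ t₂) v
            ≤ cdfInv (u γ t₁) v + sSup (lam γ '' Icc (0 : Fin d → ℝ) 1) * (t₂ - t₁) := by
  obtain ⟨hmeas, hcdf, hcdf0, μ, hμp, hμ, hweak⟩ := hsol
  have hm' : ∀ γ : Fin d, Measurable fun p : ℝ × ℝ => u γ (max p.1 0) p.2 := fun γ =>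
    (hmeas γ).comp (show Measurable fun p : ℝ × ℝ =>
      ((⟨max p.1 0, mem_Ici.2 (le_max_right _ _)⟩ : Ici (0:ℝ)), p.2) by
        exact (Measurable.subtype_mk (by fun_prop)).prodMk measurable_snd)
  set V : ℝ → ℝ → ℝ := fun t x => u γ (max t 0) x with hVdef
  set L : ℝ → ℝ → ℝ := fun t x => lamBrace lam u γ (max t 0) x with hLdef
  have hp : ∀ t, IsProbabilityMeasure (μ γ (max t 0)) := fun t => hμp _ _
  have hκm : Measurable (fun t => μ γ (max t 0)) := by
    refine Measurable.measure_of_isPiSystem_of_isProbabilityMeasure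
      (borel_eq_generateFrom_Iic ℝ ▸ BorelSpace.measurable_eq) isPiSystem_Iic ?_
    rintro s ⟨x, rfl⟩
    have : (fun t => μ γ (max t 0) (Iic x)) = fun t => ENNReal.ofReal (u γ (max t 0) x) := by
      ext t
      rw [← hμ γ _ (le_max_right _ _) x, ENNReal.ofReal_toReal (measure_ne_top _ _)]
    rw [this]
    exact ENNReal.measurable_ofReal.comp ((hm' γ).comp measurable_prodMk_right)
  let κ : ProbabilityTheory.Kernel ℝ ℝ := ⟨fun t => μ γ (max t 0), hκm⟩
  have hκ : ∀ t, κ t = μ γ (max t 0) := fun t => rfl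
  haveI : ProbabilityTheory.IsMarkovKernel κ := ⟨hp⟩
  have hVc : ∀ t, IsCDF (V t) := fun t => hcdf γ _ (le_max_right _ _)
  have hb : ∀ t x, |V t x| ≤ 1 := fun t x => by
    obtain ⟨a, b⟩ := aux_cdf_bdd _ (hVc t) x
    rw [abs_of_nonneg a]; exact b
  have hVL : ∀ a b t₀ : ℝ,
      Tendsto (fun t => ∫ x in Icc a b, |V t x - V t₀ x|) (nhds t₀) (nhds 0) := by
    intro a b t₀
    refine (hL1 γ a b (max t₀ 0) (le_max_right _ _)).comp (f := fun t => max t 0) ?_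
    rw [tendsto_nhdsWithin_iff]
    refine ⟨?_, Eventually.of_forall fun t => mem_Ici.2 (le_max_right _ _)⟩
    exact (show Continuous fun t : ℝ => max t 0 by fun_prop).continuousAt.tendsto
  set lo := sInf (lam γ '' Icc (0 : Fin d → ℝ) 1) with hlo
  set hi := sSup (lam γ '' Icc (0 : Fin d → ℝ) 1) with hhi
  have hLbd : ∀ t x, lo ≤ L t x ∧ L t x ≤ hi := fun t x =>
    aux_brace_bd lam hlam u hcdf γ _ x (le_max_right _ _)
  have hLb : ∀ t x, |L t x| ≤ max |lo| |hi| := fun t x =>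
    abs_le_max_abs_abs (hLbd t x).1 (hLbd t x).2
  have hLm : Measurable (Function.uncurry L) := aux_brace_meas lam hlam u hcdf hm' γ
  have hw : ∀ φ φt, IsTestFun φ φt → (∀ x, φ 0 x = 0) →
      ∫ t in Ici (0:ℝ), ∫ x, φt t x * V t x
        = ∫ t in Ici (0:ℝ), ∫ x, φ t x * L t x ∂(κ t) := by
    intro φ φt ht h0
    have h := hweak (fun i => if i = γ then φ else fun _ _ => 0)
      (fun i => if i = γ then φt else fun _ _ => 0) (fun i => by
        by_cases hi : i = γ
        · simpa [hi] using ht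
        · simp only [hi, if_false]
          exact ⟨continuous_const, HasCompactSupport.zero, continuous_const,
            fun t x => hasDerivAt_const _ _⟩)
    rw [Finset.sum_eq_single γ (fun i _ hi => by simp [hi]) (by simp),
      Finset.sum_eq_single γ (fun i _ hi => by simp [hi]) (by simp)] at h
    simp only [if_true, h0, zero_mul, integral_zero, add_zero] at h
    have c1 : ∫ t in Ici (0:ℝ), ∫ x, φt t x * V t x
        = ∫ t in Ici (0:ℝ), ∫ x, φt t x * u γ t x := by
      refine setIntegral_congr_fun measurableSet_Ici fun t ht => ?_
      simp only [hVdef, max_eq_left (mem_Ici.1 ht)]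
    have c2 : ∫ t in Ici (0:ℝ), ∫ x, φ t x * L t x ∂(κ t)
        = ∫ t in Ici (0:ℝ), ∫ x, φ t x * lamBrace lam u γ t x ∂(μ γ t) := by
      refine setIntegral_congr_fun measurableSet_Ici fun t ht => ?_
      simp only [hLdef, hκ, max_eq_left (mem_Ici.1 ht)]
    rw [c1, c2, h]
  have hVm : ∀ t, Measurable (V t) := fun t => (hVc t).1.measurable
  have W := aux_weak V L κ (fun t x => hμ γ _ (le_max_right _ _) x) hVm hb hVL hLm _ hLb hw
  have cont : ∀ (c : ℝ) (ψ ψ' : ℝ → ℝ), (∀ x, HasDerivAt ψ (ψ' x) x) → HasCompactSupport ψ →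
      Continuous (fun t => ∫ x, ψ (x - c * t) * V t x) := fun c ψ ψ' hψ hs =>
    aux_contG V hVm hb hVL c ψ (continuous_iff_continuousAt.2 fun t => (hψ t).continuousAt) hs
  have ext0 : ∀ g : ℝ → ℝ, Continuous g → (∀ t₁ t₂, 0 < t₁ → t₁ < t₂ → g t₁ ≤ g t₂) →
      ∀ t₁ t₂, 0 ≤ t₁ → t₁ ≤ t₂ → g t₁ ≤ g t₂ := by
    intro g hg hh t₁ t₂ h0 h12
    rcases h12.eq_or_lt with rfl | h12
    · exact le_rfl
    refine le_of_tendsto (hg.continuousAt.continuousWithinAt (s := Ioi t₁)) ?_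
    filter_upwards [Ioo_mem_nhdsGT h12] with s hs
    exact hh s t₂ (h0.trans_lt hs.1) hs.2
  have up : ∀ ψ ψ' : ℝ → ℝ, (∀ x, HasDerivAt ψ (ψ' x) x) → Continuous ψ' → HasCompactSupport ψ →
      (∀ x, 0 ≤ ψ x) → ∀ t₁ t₂, 0 ≤ t₁ → t₁ ≤ t₂ →
      ∫ x, ψ (x - hi * t₁) * V t₁ x ≤ ∫ x, ψ (x - hi * t₂) * V t₂ x := by
    intro ψ ψ' hψ hψc hs h0
    refine ext0 (fun t => ∫ x, ψ (x - hi * t) * V t x) (cont hi ψ ψ' hψ hs) ?_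
    refine aux_mono _ (cont hi ψ ψ' hψ hs) fun χ χ' a1 a2 a3 a4 a5 a6 a7 => ?_
    rw [W hi ψ ψ' χ χ' hψ hψc hs a1 a2 a4 a5 (a6 0 le_rfl) a7]
    refine setIntegral_nonpos measurableSet_Ici fun t _ => ?_
    refine mul_nonpos_of_nonneg_of_nonpos (a3 t) (integral_nonpos fun x => ?_)
    exact mul_nonpos_of_nonneg_of_nonpos (h0 _) (sub_nonpos.2 (hLbd t x).2)
  have down : ∀ ψ ψ' : ℝ → ℝ, (∀ x, HasDerivAt ψ (ψ' x) x) → Continuous ψ' → HasCompactSupport ψ →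
      (∀ x, 0 ≤ ψ x) → ∀ t₁ t₂, 0 ≤ t₁ → t₁ ≤ t₂ →
      ∫ x, ψ (x - lo * t₂) * V t₂ x ≤ ∫ x, ψ (x - lo * t₁) * V t₁ x := by
    intro ψ ψ' hψ hψc hs h0 t₁ t₂ h1 h2
    rw [← neg_le_neg_iff]
    refine ext0 (fun t => - ∫ x, ψ (x - lo * t) * V t x) (cont lo ψ ψ' hψ hs).neg ?_ t₁ t₂ h1 h2
    refine aux_mono _ (cont lo ψ ψ' hψ hs).neg fun χ χ' a1 a2 a3 a4 a5 a6 a7 => ?_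
    simp_rw [mul_neg]
    rw [integral_neg, W lo ψ ψ' χ χ' hψ hψc hs a1 a2 a4 a5 (a6 0 le_rfl) a7, neg_nonpos]
    refine setIntegral_nonneg measurableSet_Ici fun t _ => ?_
    refine mul_nonneg (a3 t) (integral_nonneg fun x => ?_)
    exact mul_nonneg (h0 _) (sub_nonneg.2 (hLbd t x).1)
  rw [ae_restrict_iff' measurableSet_Ioo]
  refine Eventually.of_forall fun v hv t₁ t₂ h1 h12 => ?_
  have E1 : u γ t₁ = V t₁ := by ext x; simp only [hVdef, max_eq_left h1]
  have E2 : u γ t₂ = V t₂ := by ext x; simp only [hVdef, max_eq_left (h1.trans h12)]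
  rw [E1, E2]
  constructor
  · have hc := aux_cmp (V t₂) (V t₁) (hVc t₂).1 (hVc t₁).1 (hb _) (hb _) (hVc t₁).2.1
      (lo * t₂) (lo * t₁) (fun ψ ψ' a b c e => down ψ ψ' a b c e t₁ t₂ h1 h12)
    have := aux_inv (V t₂) (V t₁) (hVc _) (hVc _) (lo * t₁ - lo * t₂) v hv (fun x => by
      have := hc (x - lo * t₂)
      rw [sub_add_cancel] at this
      convert this using 2; ring)
    linarith
  · have hc := aux_cmp (V t₁) (V t₂) (hVc t₁).1 (hVc t₂).1 (hb _) (hb _) (hVc t₂).2.1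
      (hi * t₁) (hi * t₂) (fun ψ ψ' a b c e => up ψ ψ' a b c e t₁ t₂ h1 h12)
    refine aux_inv (V t₁) (V t₂) (hVc _) (hVc _) _ v hv (fun x => ?_)
    have := hc (x - hi * t₁)
    rw [sub_add_cancel] at this
    convert this using 2; ring
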